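/- arXiv:2404.03154 — 5 statements merged into one kernel-verified Lean document; each statement's English description precedes it below -/
import Mathlib

section
/- Let S be a nonempty finite index set and let c : S → ℝ satisfy c i > 0 for all i. Define y* : S → ℝ by y* i = √(c i) / (∑_{k∈S} √(c k)). Then y* i > 0 for all i, ∑_{i∈S} y* i = 1, and ∑_{i∈S} c i / (y* i) = (∑_{i∈S} √(c i))²; consequently y* is a global minimizer of y ↦ ∑_{i∈S} c i / y i over all y with y i > 0 and ∑_{i∈S} y i ≤ 1. -/
section SqrtAllocation

variable {ι : Type*} {s : Finset ι} {c y : ι → ℝ}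

/- Cauchy–Schwarz for `√(y i)` and `√(c i / y i)`, whose product is `√(c i)`; equality holds exactly
when `√c` is proportional to `y`, which is where the optimal allocation comes from. -/
theorem sq_sum_sqrt_le_sum_mul_sum_div (hc : ∀ i ∈ s, 0 ≤ c i) (hy : ∀ i ∈ s, 0 < y i) :
    (∑ i ∈ s, √(c i)) ^ 2 ≤ (∑ i ∈ s, y i) * ∑ i ∈ s, c i / y i := by
  refine s.sum_sq_le_sum_mul_sum_of_sq_le_mul (fun i hi ↦ (hy i hi).le)
    (fun i hi ↦ div_nonneg (hc i hi) (hy i hi).le) fun i hi ↦ ?_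
  rw [Real.sq_sqrt (hc i hi), mul_div_cancel₀ _ (hy i hi).ne']

theorem sq_sum_sqrt_le_sum_div_of_sum_le_one (hc : ∀ i ∈ s, 0 ≤ c i) (hy : ∀ i ∈ s, 0 < y i)
    (hy_sum : ∑ i ∈ s, y i ≤ 1) :
    (∑ i ∈ s, √(c i)) ^ 2 ≤ ∑ i ∈ s, c i / y i := by
  have cost_nonneg : 0 ≤ ∑ i ∈ s, c i / y i :=
    Finset.sum_nonneg fun i hi ↦ div_nonneg (hc i hi) (hy i hi).le
  calc (∑ i ∈ s, √(c i)) ^ 2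
      ≤ (∑ i ∈ s, y i) * ∑ i ∈ s, c i / y i := sq_sum_sqrt_le_sum_mul_sum_div hc hy
    _ ≤ ∑ i ∈ s, c i / y i := mul_le_of_le_one_left cost_nonneg hy_sum

/- Where `c i ≤ 0`, the square root is the junk value `0`, and the `i`-th summand on the left is a
division by zero, hence also `0`. -/
theorem sum_div_sqrt_div_sum_sqrt (s : Finset ι) (c : ι → ℝ) :
    ∑ i ∈ s, c i / (√(c i) / ∑ k ∈ s, √(c k)) = (∑ i ∈ s, √(c i)) ^ 2 := by
  simp only [div_div_eq_mul_div, mul_div_right_comm, Real.div_sqrt, ← Finset.sum_mul, sq]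

end SqrtAllocation

/-- Closed-form optimal bandwidth allocation: `y* i = √(c i) / ∑ k √(c k)` is positive,
sums to one, attains the value `(∑ √(c i))²`, and globally minimizes
`y ↦ ∑ c i / y i` over positive `y` summing to at most `1`. -/
theorem stmt_1 {S : Type*} [Fintype S] [Nonempty S]
    (c : S → ℝ) (hc : ∀ i, 0 < c i)
    (ystar : S → ℝ)
    (hystar : ∀ i, ystar i = Real.sqrt (c i) / (∑ k, Real.sqrt (c k))) :
    (∀ i, 0 < ystar i) ∧
    (∑ i, ystar i = 1) ∧
    (∑ i, c i / ystar i = (∑ i, Real.sqrt (c i)) ^ 2) ∧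
    (∀ y : S → ℝ, (∀ i, 0 < y i) → (∑ i, y i ≤ 1) →
      ∑ i, c i / ystar i ≤ ∑ i, c i / y i) := by
  obtain rfl : ystar = fun i ↦ √(c i) / ∑ k, √(c k) := funext hystar
  have sqrt_pos (i : S) : 0 < √(c i) := Real.sqrt_pos.mpr (hc i)
  have sum_sqrt_pos : 0 < ∑ k, √(c k) :=
    Finset.sum_pos (fun i _ ↦ sqrt_pos i) Finset.univ_nonempty
  have optimal_value := sum_div_sqrt_div_sum_sqrt Finset.univ c
  refine ⟨fun i ↦ div_pos (sqrt_pos i) sum_sqrt_pos, ?_, optimal_value, fun y hy hy_sum ↦ ?_⟩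
  · rw [← Finset.sum_div, div_self sum_sqrt_pos.ne']
  · exact optimal_value.trans_le <|
      sq_sum_sqrt_le_sum_div_of_sum_le_one (fun i _ ↦ (hc i).le) (fun i _ ↦ hy i) hy_sum
end

section
/- Let S be a nonempty finite index set, let f, ρ : S → ℝ be positive functions, and let F, Z > 0 be reals. Define z* : S → ℝ by z* i = √(f i · ρ i) / (∑_{k∈S} √(f k · ρ k)). Then z* i > 0 for all i, ∑_{i∈S} z* i = 1, and for every z : S → ℝ with z i > 0 for all i and ∑_{i∈S} z i ≤ 1 one has ∑_{i∈S} (f i · ρ i)/(F · Z · z i) ≥ ∑_{i∈S} (f i · ρ i)/(F · Z · z* i) = (∑_{i∈S} √((f i · ρ i)/(F · Z)))². -/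
/-!
With `c i = f i * ρ i / (F * Z)` the total delay is `∑ c i / z i`. Cauchy–Schwarz applied to
`√(c i / z i)` and `√(z i)` bounds `(∑ √(c i))²` by `(∑ c i / z i) * ∑ z i`, with equality when `z`
is proportional to `√c`. Such a `z` does not change when `c` is rescaled, so it can be computed from
`f i * ρ i` alone.
-/

section SqrtShare

variable {ι : Type*} {s : Finset ι} {w z : ι → ℝ} {i : ι}

/-- The square-root allocation: the unit resource is divided among the members of `s` in proportion
to the square roots of their weights `w`. For positive weights it minimizes `∑ i ∈ s, w i / z i`
over positive `z` of total at most `1`. -/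
noncomputable def sqrtShare (s : Finset ι) (w : ι → ℝ) (i : ι) : ℝ :=
  √(w i) / ∑ k ∈ s, √(w k)

lemma sum_sqrt_pos (hi : i ∈ s) (hw : 0 < w i) : 0 < ∑ k ∈ s, √(w k) :=
  Finset.sum_pos' (fun k _ ↦ Real.sqrt_nonneg (w k)) ⟨i, hi, Real.sqrt_pos.mpr hw⟩

lemma sqrtShare_pos (hi : i ∈ s) (hw : 0 < w i) : 0 < sqrtShare s w i :=
  div_pos (Real.sqrt_pos.mpr hw) (sum_sqrt_pos hi hw)

lemma sum_sqrtShare (hw : ∃ i ∈ s, 0 < w i) : ∑ i ∈ s, sqrtShare s w i = 1 := by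
  obtain ⟨i, hi, hwi⟩ := hw
  simp only [sqrtShare, ← Finset.sum_div]
  exact div_self (sum_sqrt_pos hi hwi).ne'

lemma sqrtShare_div_const {C : ℝ} (hC : 0 < C) (s : Finset ι) (w : ι → ℝ) :
    sqrtShare s (fun k ↦ w k / C) = sqrtShare s w := by
  funext i
  simp only [sqrtShare, Real.sqrt_div' _ hC.le, ← Finset.sum_div]
  exact div_div_div_cancel_right₀ (Real.sqrt_pos.mpr hC).ne' _ _

/- Where `w i ≤ 0`, both `√(w i)` and the quotient `w i / sqrtShare s w i` (a division by `0`)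
vanish. -/
lemma sum_div_sqrtShare (s : Finset ι) (w : ι → ℝ) :
    ∑ i ∈ s, w i / sqrtShare s w i = (∑ i ∈ s, √(w i)) ^ 2 := by
  have term_eq (i : ι) : w i / sqrtShare s w i = √(w i) * ∑ k ∈ s, √(w k) := by
    rw [sqrtShare, ← div_mul, Real.div_sqrt]
  simp only [term_eq, ← Finset.sum_mul, sq]

lemma sq_sum_sqrt_le_sum_div_mul_sum (hw : ∀ i ∈ s, 0 ≤ w i) (hz : ∀ i ∈ s, 0 < z i) :
    (∑ i ∈ s, √(w i)) ^ 2 ≤ (∑ i ∈ s, w i / z i) * ∑ i ∈ s, z i :=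
  Finset.sum_sq_le_sum_mul_sum_of_sq_le_mul s
    (fun i hi ↦ div_nonneg (hw i hi) (hz i hi).le) (fun i hi ↦ (hz i hi).le)
    (fun i hi ↦ by rw [Real.sq_sqrt (hw i hi), div_mul_cancel₀ _ (hz i hi).ne'])

lemma sum_div_sqrtShare_le (hw : ∀ i ∈ s, 0 ≤ w i) (hz : ∀ i ∈ s, 0 < z i)
    (hz_sum : ∑ i ∈ s, z i ≤ 1) :
    ∑ i ∈ s, w i / sqrtShare s w i ≤ ∑ i ∈ s, w i / z i :=
  calc ∑ i ∈ s, w i / sqrtShare s w i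
      = (∑ i ∈ s, √(w i)) ^ 2 := sum_div_sqrtShare s w
    _ ≤ (∑ i ∈ s, w i / z i) * ∑ i ∈ s, z i := sq_sum_sqrt_le_sum_div_mul_sum hw hz
    _ ≤ ∑ i ∈ s, w i / z i :=
      mul_le_of_le_one_right (Finset.sum_nonneg fun i hi ↦ div_nonneg (hw i hi) (hz i hi).le) hz_sum

end SqrtShare

/-- Closed-form optimal computing resource allocation:
`z* i = √(f i · ρ i) / ∑ k √(f k · ρ k)` is positive, sums to one, and for every
positive `z` summing to at most `1`, the Amdahl parallel-part delay satisfies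
`∑ (f i ρ i)/(F Z z i) ≥ ∑ (f i ρ i)/(F Z z* i) = (∑ √((f i ρ i)/(F Z)))²`. -/
theorem stmt_3 {S : Type*} [Fintype S] [Nonempty S]
    (f ρ : S → ℝ) (hf : ∀ i, 0 < f i) (hρ : ∀ i, 0 < ρ i)
    (F Z : ℝ) (hF : 0 < F) (hZ : 0 < Z)
    (zstar : S → ℝ)
    (hzstar : ∀ i, zstar i = Real.sqrt (f i * ρ i) / (∑ k, Real.sqrt (f k * ρ k))) :
    (∀ i, 0 < zstar i) ∧
    (∑ i, zstar i = 1) ∧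
    (∀ z : S → ℝ, (∀ i, 0 < z i) → (∑ i, z i ≤ 1) →
      ∑ i, (f i * ρ i) / (F * Z * z i) ≥ ∑ i, (f i * ρ i) / (F * Z * zstar i)) ∧
    (∑ i, (f i * ρ i) / (F * Z * zstar i) = (∑ i, Real.sqrt ((f i * ρ i) / (F * Z))) ^ 2) := by
  have hFZ : 0 < F * Z := mul_pos hF hZ
  let c : S → ℝ := fun i ↦ f i * ρ i / (F * Z)
  have hc (i : S) : 0 < c i := div_pos (mul_pos (hf i) (hρ i)) hFZ
  obtain rfl : zstar = sqrtShare Finset.univ c :=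
    (funext hzstar).trans (sqrtShare_div_const hFZ Finset.univ fun i ↦ f i * ρ i).symm
  simp only [← div_div _ (F * Z)]
  exact ⟨fun i ↦ sqrtShare_pos (Finset.mem_univ i) (hc i),
    sum_sqrtShare (Finset.univ_nonempty.imp fun i hi ↦ ⟨hi, hc i⟩),
    fun z hz hz_sum ↦ sum_div_sqrtShare_le (fun i _ ↦ (hc i).le) (fun i _ ↦ hz i) hz_sum,
    sum_div_sqrtShare Finset.univ c⟩
end

section
/- Let m, n ≥ 1, M = Fin m, E = Fin n, let p, q : M → E → ℝ be entrywise nonnegative, c : M → E → ℝ arbitrary, and let μ, ν : E → ℝ be entrywise nonnegative. Call x : M → E → ℝ feasible if x i j ∈ {0,1} for all i, j and ∑_{j∈E} x i j ≤ 1 for each i. Define the Lagrangian L(x, a, b) = ∑_{j∈E}(a j + b j) + ∑_{i∈M}∑_{j∈E} c i j · x i j + ∑_{j∈E} μ j ·(−√(a j) + ∑_{i∈M} p i j · x i j) + ∑_{j∈E} ν j ·(−√(b j) + ∑_{i∈M} q i j · x i j) for a, b : E → ℝ with a j, b j ≥ 0. Then the infimum of L over all feasible x and all entrywise-nonnegative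 a, b is attained and equals g(μ, ν) = −∑_{j∈E}(μ j² + ν j²)/4 + ∑_{i∈M} min(0, min_{j∈E}(μ j · p i j + ν j · q i j + c i j)). -/
/-!
For fixed multipliers the Lagrangian splits into a sum of one-variable problems: each slack
contributes `a - t * √a = (√a - t / 2) ^ 2 - t ^ 2 / 4`, and each device `i` contributes a linear
form in the row `x i`, which over the feasible rows is minimised either by the zero row or by
putting the single `1` on the cheapest server.
-/

theorem isLeast_sum_image_pi {ι α : Type*} {β : ι → Type*} [Fintype ι] [AddCommMonoid α]
    [Preorder α] [AddLeftMono α] {s : ∀ i, Set (β i)} {f : ∀ i, β i → α} {l : ι → α}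
    (h : ∀ i, IsLeast (f i '' s i) (l i)) :
    IsLeast ((fun x : ∀ i, β i => ∑ i, f i (x i)) '' Set.univ.pi s) (∑ i, l i) := by
  constructor
  · choose x hx hfx using fun i => (h i).1
    exact ⟨x, fun i _ => hx i, Finset.sum_congr rfl fun i _ => hfx i⟩
  · rintro _ ⟨x, hx, rfl⟩
    exact Finset.sum_le_sum fun i _ => (h i).2 (Set.mem_image_of_mem _ (hx i trivial))

theorem isLeast_image_sub_mul_sqrt (t : ℝ) :
    IsLeast ((fun a => a - t * √a) '' Set.Ici 0) (-(t⁺ ^ 2 / 4)) := by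
  constructor
  · have mul_posPart : t * t⁺ = t⁺ ^ 2 := by
      rcases le_total 0 t with ht | ht
      · rw [posPart_of_nonneg ht, sq]
      · simp [posPart_of_nonpos ht]
    refine ⟨(t⁺ / 2) ^ 2, sq_nonneg (t⁺ / 2), ?_⟩
    dsimp only
    rw [Real.sqrt_sq (by positivity)]
    linear_combination -mul_posPart / 2
  · rintro _ ⟨a, ha, rfl⟩
    calc -(t⁺ ^ 2 / 4) ≤ (√a - t⁺ / 2) ^ 2 - t⁺ ^ 2 / 4 := by linarith [sq_nonneg (√a - t⁺ / 2)]
      _ = a - t⁺ * √a := by linear_combination Real.sq_sqrt ha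
      _ ≤ a - t * √a := by gcongr; exact le_posPart t

section Selection

variable {ι R : Type*} [Fintype ι] [Ring R] [LinearOrder R]

variable (ι R) in
/-- The indicator vectors of subsets of `ι` with at most one element: the feasible rows of an
association matrix, the zero vector standing for local computation. -/
def selectionVectors : Set (ι → R) :=
  {y | (∀ j, y j = 0 ∨ y j = 1) ∧ ∑ j, y j ≤ 1}

theorem single_one_mem_selectionVectors [DecidableEq ι] (k : ι) :
    (Pi.single k 1 : ι → R) ∈ selectionVectors ι R := by
  refine ⟨fun j => ?_, by simp⟩
  rcases eq_or_ne j k with rfl | hj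
  · simp
  · simp [hj]

variable [IsOrderedRing R]

theorem zero_mem_selectionVectors : (0 : ι → R) ∈ selectionVectors ι R := by
  simp [selectionVectors]

theorem min_zero_inf'_le_sum_mul [Nonempty ι] (w : ι → R) {y : ι → R} (hy : ∀ j, 0 ≤ y j)
    (hsum : ∑ j, y j ≤ 1) :
    min 0 (Finset.univ.inf' Finset.univ_nonempty w) ≤ ∑ j, w j * y j := by
  set t := min 0 (Finset.univ.inf' Finset.univ_nonempty w)
  have t_le (j : ι) : t ≤ w j :=
    (min_le_right _ _).trans (Finset.inf'_le w (Finset.mem_univ j))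
  calc t = t * 1 := (mul_one t).symm
    _ ≤ t * ∑ j, y j := mul_le_mul_of_nonpos_left hsum (min_le_left _ _)
    _ = ∑ j, t * y j := Finset.mul_sum _ _ _
    _ ≤ ∑ j, w j * y j :=
      Finset.sum_le_sum fun j _ => mul_le_mul_of_nonneg_right (t_le j) (hy j)

theorem isLeast_image_sum_mul_selectionVectors [Nonempty ι] (w : ι → R) :
    IsLeast ((fun y => ∑ j, w j * y j) '' selectionVectors ι R)
      (min 0 (Finset.univ.inf' Finset.univ_nonempty w)) := by
  classical
  constructor
  · obtain ⟨k, -, hk⟩ := Finset.exists_mem_eq_inf' Finset.univ_nonempty w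
    rcases min_choice 0 (Finset.univ.inf' Finset.univ_nonempty w) with h | h
    · exact ⟨0, zero_mem_selectionVectors, by simp [h]⟩
    · refine ⟨Pi.single k 1, single_one_mem_selectionVectors k, ?_⟩
      rw [h, hk]
      simp [Pi.single_apply]
  · rintro _ ⟨y, ⟨hy, hsum⟩, rfl⟩
    refine min_zero_inf'_le_sum_mul w (fun j => ?_) hsum
    rcases hy j with h | h <;> simp [h]

end Selection

section Lagrangian

variable {M E : Type*} [Fintype M] [Fintype E] (p q c : M → E → ℝ) (μ ν : E → ℝ)

/-- The Lagrangian of the slack-reformulated association problem, with multipliers `μ` and `ν`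
for the constraints `√(a j) = ∑ i, p i j * x i j` and `√(b j) = ∑ i, q i j * x i j`. -/
noncomputable def slackLagrangian (x : M → E → ℝ) (a b : E → ℝ) : ℝ :=
  ∑ j, (a j + b j) + ∑ i, ∑ j, c i j * x i j
    + ∑ j, μ j * (-√(a j) + ∑ i, p i j * x i j)
    + ∑ j, ν j * (-√(b j) + ∑ i, q i j * x i j)

/-- The coefficient of `x i j` in the Lagrangian: the cost of serving device `i` at server `j`
when the constraints are priced by `μ` and `ν`. -/
def reducedCost (i : M) (j : E) : ℝ :=
  μ j * p i j + ν j * q i j + c i j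

theorem slackLagrangian_eq_separable (x : M → E → ℝ) (a b : E → ℝ) :
    slackLagrangian p q c μ ν x a b =
      ∑ j, (a j - μ j * √(a j)) + ∑ j, (b j - ν j * √(b j))
        + ∑ i, ∑ j, reducedCost p q c μ ν i j * x i j := by
  have sum_mul_sum_comm (t : E → ℝ) (r : M → E → ℝ) :
      ∑ j, t j * ∑ i, r i j * x i j = ∑ i, ∑ j, t j * r i j * x i j := by
    simp only [Finset.mul_sum, mul_assoc]
    exact Finset.sum_comm
  simp only [slackLagrangian, reducedCost, add_mul, mul_add, mul_neg, Finset.sum_add_distrib,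
    Finset.sum_sub_distrib, Finset.sum_neg_distrib, sum_mul_sum_comm]
  ring

/-- The slack constraints are equalities, so the dual function is defined for multipliers of
either sign; a negative multiplier makes the slack `0` optimal. -/
theorem stmt_6_general [Nonempty E] :
    IsLeast
      {v : ℝ | ∃ (x : M → E → ℝ) (a b : E → ℝ),
        (∀ i j, x i j = 0 ∨ x i j = 1) ∧ (∀ i, ∑ j, x i j ≤ 1) ∧
        (∀ j, 0 ≤ a j) ∧ (∀ j, 0 ≤ b j) ∧ v = slackLagrangian p q c μ ν x a b}
      (-∑ j, ((μ j)⁺ ^ 2 + (ν j)⁺ ^ 2) / 4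
        + ∑ i, min 0 (Finset.univ.inf' Finset.univ_nonempty
            (fun j => reducedCost p q c μ ν i j))) := by
  have slack_part (t : E → ℝ) := isLeast_sum_image_pi fun j => isLeast_image_sub_mul_sqrt (t j)
  have row_part := isLeast_sum_image_pi fun i =>
    isLeast_image_sum_mul_selectionVectors (reducedCost p q c μ ν i)
  have split_slacks : -∑ j, ((μ j)⁺ ^ 2 + (ν j)⁺ ^ 2) / 4
      = ∑ j, -((μ j)⁺ ^ 2 / 4) + ∑ j, -((ν j)⁺ ^ 2 / 4) := by
    simp only [add_div, Finset.sum_add_distrib, Finset.sum_neg_distrib, neg_add]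
  rw [split_slacks]
  constructor
  · obtain ⟨a, ha, ha_min⟩ := (slack_part μ).1
    obtain ⟨b, hb, hb_min⟩ := (slack_part ν).1
    obtain ⟨x, hx, hx_min⟩ := row_part.1
    refine ⟨x, a, b, fun i => (hx i trivial).1, fun i => (hx i trivial).2,
      fun j => ha j trivial, fun j => hb j trivial, ?_⟩
    rw [slackLagrangian_eq_separable, ← ha_min, ← hb_min, ← hx_min]
  · rintro _ ⟨x, a, b, hx, hsum, ha, hb, rfl⟩
    rw [slackLagrangian_eq_separable]
    gcongr ?_ + ?_ + ?_
    · exact (slack_part μ).2 ⟨a, fun j _ => ha j, rfl⟩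
    · exact (slack_part ν).2 ⟨b, fun j _ => hb j, rfl⟩
    · exact row_part.2 ⟨x, fun i _ => ⟨hx i, hsum i⟩, rfl⟩

end Lagrangian

/-- Closed form of the Lagrangian dual objective of the slack-reformulated
user-association problem: the infimum of the Lagrangian over feasible `x`
(`{0,1}`-valued with row sums at most `1`) and nonnegative slacks `a b` is
attained and equals
`−∑_j (μ j² + ν j²)/4 + ∑_i min(0, min_j (μ j p i j + ν j q i j + c i j))`. -/
theorem stmt_6 (m n : ℕ) (hm : 0 < m) (hn : 0 < n)
    (p q c : Fin m → Fin n → ℝ)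
    (hp : ∀ i j, 0 ≤ p i j) (hq : ∀ i j, 0 ≤ q i j)
    (μ ν : Fin n → ℝ) (hμ : ∀ j, 0 ≤ μ j) (hν : ∀ j, 0 ≤ ν j) :
    IsLeast
      { v : ℝ | ∃ (x : Fin m → Fin n → ℝ) (a b : Fin n → ℝ),
          (∀ i j, x i j = 0 ∨ x i j = 1) ∧ (∀ i, ∑ j, x i j ≤ 1) ∧
          (∀ j, 0 ≤ a j) ∧ (∀ j, 0 ≤ b j) ∧
          v = ∑ j, (a j + b j) + ∑ i, ∑ j, c i j * x i j
              + ∑ j, μ j * (-Real.sqrt (a j) + ∑ i, p i j * x i j)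
              + ∑ j, ν j * (-Real.sqrt (b j) + ∑ i, q i j * x i j) }
      (-∑ j, (μ j ^ 2 + ν j ^ 2) / 4
        + ∑ i, min 0 (Finset.univ.inf' ⟨⟨0, hn⟩, Finset.mem_univ _⟩
            (fun j => μ j * p i j + ν j * q i j + c i j))) := by
  have : Nonempty (Fin n) := ⟨⟨0, hn⟩⟩
  simpa only [posPart_of_nonneg, hμ, hν, slackLagrangian, reducedCost]
    using stmt_6_general p q c μ ν
end

section
/- Let m, n ≥ 1, M = Fin m, E = Fin n, let p, q : M → E → ℝ be entrywise nonnegative and c : M → E → ℝ. Define F(x) = ∑_{j∈E}(∑_{i∈M} p i j · x i j)² + ∑_{j∈E}(∑_{i∈M} q i j · x i j)² + ∑_{i∈M}∑_{j∈E} c i j · x i j and g(μ, ν) = −∑_{j∈E}(μ j² + ν j²)/4 + ∑_{i∈M} min(0, min_{j∈E}(μ j · p i j + ν j · q i j + c i j)). Then for every μ, ν : E → ℝ with μ j ≥ 0 and ν j ≥ 0 for all j, and every feasible x (meaning x i j ∈ {0,1} for all i, j and ∑_{j∈E} x i j ≤ 1 for each i), one has g(μ, ν) ≤ F(x). In particular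 g(μ, ν) is a lower bound on the optimal value of the primal user-association problem. -/
/-!
Introduce the server loads `y j = ∑ i, p i j * x i j` and `z j = ∑ i, q i j * x i j` as separate
variables and dualize these two equations with multipliers `μ` and `ν`. The Lagrangian separates:
each `y j` contributes `y j ^ 2 - μ j * y j ≥ -μ j ^ 2 / 4` (likewise `z j` and `ν j`), and each
device `i` contributes a linear form in its row of `x`, whose minimum over subprobability vectors
is attained at `0` or at a unit vector. At the true loads the multiplier terms vanish and the
Lagrangian is the primal objective.
-/

open Finset

theorem min_zero_inf'_le_sum_mul_s8 {ι R : Type*} [Ring R] [LinearOrder R] [IsOrderedRing R]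
    {s : Finset ι} (hs : s.Nonempty) (a : ι → R) {w : ι → R} (hw : ∀ i ∈ s, 0 ≤ w i)
    (hw_sum : ∑ i ∈ s, w i ≤ 1) :
    min 0 (s.inf' hs a) ≤ ∑ i ∈ s, a i * w i := by
  calc min 0 (s.inf' hs a)
      ≤ min 0 (s.inf' hs a) * ∑ i ∈ s, w i := by
        simpa only [mul_one] using mul_le_mul_of_nonpos_left hw_sum (min_le_left 0 (s.inf' hs a))
    _ = ∑ i ∈ s, min 0 (s.inf' hs a) * w i := mul_sum ..
    _ ≤ ∑ i ∈ s, a i * w i := sum_le_sum fun i hi =>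
        mul_le_mul_of_nonneg_right ((min_le_right _ _).trans (inf'_le a hi)) (hw i hi)

theorem neg_sq_div_four_le_sq_sub_mul {𝕜 : Type*} [Field 𝕜] [LinearOrder 𝕜]
    [IsStrictOrderedRing 𝕜] (a b : 𝕜) : -(a ^ 2 / 4) ≤ b ^ 2 - a * b := by
  linear_combination sq_nonneg (b - a / 2)

namespace UserAssociation

section Definitions

variable {M E R : Type*} [Fintype M]

/-- The load `∑ i, w i j * x i j` that the association `x` puts on server `j`, where device `i`
has weight `w i j` there. -/
def load [NonUnitalNonAssocSemiring R] (w x : M → E → R) (j : E) : R :=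
  ∑ i, w i j * x i j

/-- The primal objective `F(x)`: the squared loads of all servers for the communication weights
`p` and the computing weights `q`, plus the linear cost `c`. -/
def primalObjective [Fintype E] [Semiring R] (p q c x : M → E → R) : R :=
  ∑ j, load p x j ^ 2 + ∑ j, load q x j ^ 2 + ∑ i, ∑ j, c i j * x i j

/-- The Lagrangian of the problem of minimizing `∑ y j ^ 2 + ∑ z j ^ 2 + ∑ c i j * x i j` subject
to `load p x = y` (with multiplier `μ`) and `load q x = z` (with multiplier `ν`). -/
def lagrangian [Fintype E] [Ring R] (p q c : M → E → R) (μ ν : E → R) (x : M → E → R)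
    (y z : E → R) : R :=
  ∑ j, y j ^ 2 + ∑ j, z j ^ 2 + ∑ i, ∑ j, c i j * x i j
    + ∑ j, μ j * (load p x j - y j) + ∑ j, ν j * (load q x j - z j)

/-- The coefficient of `x i j` in the Lagrangian. -/
def reducedCost [Semiring R] (p q c : M → E → R) (μ ν : E → R) (i : M) (j : E) : R :=
  μ j * p i j + ν j * q i j + c i j

/-- The closed form `g(μ, ν)` of the Lagrangian dual function. The outer `min 0` is the option of
leaving a device unassociated. -/
def dualFunction [Fintype E] [Nonempty E] [Field R] [LinearOrder R] (p q c : M → E → R)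
    (μ ν : E → R) : R :=
  -∑ j, (μ j ^ 2 + ν j ^ 2) / 4 + ∑ i, min 0 (univ.inf' univ_nonempty (reducedCost p q c μ ν i))

end Definitions

variable {M E R : Type*} [Fintype M] [Fintype E]

theorem sum_mul_load [CommSemiring R] (μ : E → R) (w x : M → E → R) :
    ∑ j, μ j * load w x j = ∑ i, ∑ j, μ j * w i j * x i j := by
  simp only [load, mul_sum, mul_assoc]
  exact sum_comm

theorem lagrangian_load [Ring R] (p q c : M → E → R) (μ ν : E → R) (x : M → E → R) :
    lagrangian p q c μ ν x (load p x) (load q x) = primalObjective p q c x := by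
  simp only [lagrangian, primalObjective, sub_self, mul_zero, sum_const_zero, add_zero]

theorem lagrangian_eq_sum_add_sum_reducedCost_mul [CommRing R] (p q c : M → E → R) (μ ν : E → R)
    (x : M → E → R) (y z : E → R) :
    lagrangian p q c μ ν x y z =
      ∑ j, ((y j ^ 2 - μ j * y j) + (z j ^ 2 - ν j * z j))
        + ∑ i, ∑ j, reducedCost p q c μ ν i j * x i j := by
  simp only [lagrangian, reducedCost, mul_sub, add_mul, sum_add_distrib, sum_sub_distrib,
    sum_mul_load]
  ring

variable [Nonempty E] [Field R] [LinearOrder R] [IsStrictOrderedRing R]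

theorem dualFunction_le_lagrangian (p q c : M → E → R) (μ ν : E → R) {x : M → E → R}
    (hx : ∀ i j, 0 ≤ x i j) (hx_row : ∀ i, ∑ j, x i j ≤ 1) (y z : E → R) :
    dualFunction p q c μ ν ≤ lagrangian p q c μ ν x y z := by
  rw [lagrangian_eq_sum_add_sum_reducedCost_mul, dualFunction, ← sum_neg_distrib]
  refine add_le_add (sum_le_sum fun j _ => ?_) (sum_le_sum fun i _ => ?_)
  · rw [add_div, neg_add]
    exact add_le_add (neg_sq_div_four_le_sq_sub_mul _ _) (neg_sq_div_four_le_sq_sub_mul _ _)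
  · exact min_zero_inf'_le_sum_mul_s8 univ_nonempty _ (fun j _ => hx i j) (hx_row i)

end UserAssociation

open UserAssociation in
theorem stmt_8_general {M E 𝕜 : Type*} [Fintype M] [Fintype E] [Nonempty E] [Field 𝕜]
    [LinearOrder 𝕜] [IsStrictOrderedRing 𝕜] (p q c : M → E → 𝕜) (μ ν : E → 𝕜) {x : M → E → 𝕜}
    (hx : ∀ i j, 0 ≤ x i j) (hx_row : ∀ i, ∑ j, x i j ≤ 1) :
    dualFunction p q c μ ν ≤ primalObjective p q c x :=
  (dualFunction_le_lagrangian p q c μ ν hx hx_row _ _).trans_eq (lagrangian_load p q c μ ν x)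

/-- Weak duality for the user-association problem: for nonnegative dual
variables `μ, ν` and every feasible association matrix `x` (`{0,1}`-valued with
row sums at most `1`), the dual value `g(μ, ν)` is a lower bound on the primal
objective `F(x)`. -/
theorem stmt_8 (m n : ℕ) (hm : 0 < m) (hn : 0 < n)
    (p q c : Fin m → Fin n → ℝ)
    (hp : ∀ i j, 0 ≤ p i j) (hq : ∀ i j, 0 ≤ q i j)
    (μ ν : Fin n → ℝ) (hμ : ∀ j, 0 ≤ μ j) (hν : ∀ j, 0 ≤ ν j)
    (x : Fin m → Fin n → ℝ)
    (hx01 : ∀ i j, x i j = 0 ∨ x i j = 1) (hxrow : ∀ i, ∑ j, x i j ≤ 1) :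
    -∑ j, (μ j ^ 2 + ν j ^ 2) / 4
      + ∑ i, min 0 (Finset.univ.inf' ⟨⟨0, hn⟩, Finset.mem_univ _⟩
          (fun j => μ j * p i j + ν j * q i j + c i j))
    ≤ ∑ j, (∑ i, p i j * x i j) ^ 2 + ∑ j, (∑ i, q i j * x i j) ^ 2
      + ∑ i, ∑ j, c i j * x i j := by
  have : Nonempty (Fin n) := ⟨⟨0, hn⟩⟩
  exact stmt_8_general p q c μ ν (fun i j => (hx01 i j).elim Eq.ge fun h => h ▸ zero_le_one) hxrow
end

section
/- (Weak duality / bounded optimality gap.) Let m, n ≥ 1, M = Fin m, E = Fin n, let p, q : M → E → ℝ be entrywise nonnegative, c : M → E → ℝ, and let μ, ν : E → ℝ be entrywise nonnegative. Set w i j = μ j · p i j + ν j · q i j + c i j. Suppose x̂ is feasible (x̂ i j ∈ {0,1}, ∑_{j∈E} x̂ i j ≤ 1 for each i) and minimizes ∑_{i,j} w i j · x i j over all feasible x, and define Δ₁ j = μ j / 2 − ∑_{i∈M} p i j · x̂ i j and Δ₂ j = ν j / 2 − ∑_{i∈M} q i j · x̂ i j. Then for every feasible x, F(x̂) − F(x)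 ≤ ∑_{j∈E} (Δ₁ j² + Δ₂ j²); i.e., the gap between the recovered solution x̂ and the globally optimal solution of the user-association problem is bounded by ∑_j ((Δ₁ j)² + (Δ₂ j)²). -/
/-!
Introducing slacks `√(a k) = g k x`, the problem of minimizing `∑ k, g k x ^ 2 + h x` becomes that
of minimizing `∑ k, a k + h x`. Its Lagrangian at the optimal slacks `√(a k) = μ k / 2` falls short
of the objective by exactly `∑ k, (μ k / 2 - g k x) ^ 2`: complete the square. So the Lagrangian
bounds the objective from below everywhere, and at a minimizer of the Lagrangian the residual sum
of squares bounds the optimality gap. For user association, the `g k` are the `p`-loads and the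
`q`-loads of all the servers.
-/

section SumSq

variable {κ X K : Type*} [Fintype κ]

/-- The objective of a sum-of-squares problem, with decision `x`, squared terms `g k x` and
remaining cost `h x`. -/
def sumSqObjective [Semiring K] (g : κ → X → K) (h : X → K) (x : X) : K :=
  ∑ k, g k x ^ 2 + h x

/-- The Lagrangian of the slack form of `sumSqObjective`, with multipliers `μ` and with the slacks
already eliminated: `a - μ * √a` takes the value `-(μ / 2) ^ 2` at `√a = μ / 2`. -/
def sumSqLagrangian [Field K] (g : κ → X → K) (h : X → K) (μ : κ → K) (x : X) : K :=
  ∑ k, (μ k * g k x - (μ k / 2) ^ 2) + h x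

theorem sumSqObjective_eq_lagrangian_add_sum_residual_sq [Field K] [NeZero (2 : K)]
    (g : κ → X → K) (h : X → K) (μ : κ → K) (x : X) :
    sumSqObjective g h x = sumSqLagrangian g h μ x + ∑ k, (μ k / 2 - g k x) ^ 2 := by
  have complete_square (k : κ) :
      g k x ^ 2 = (μ k * g k x - (μ k / 2) ^ 2) + (μ k / 2 - g k x) ^ 2 := by
    field_simp
    ring
  rw [sumSqObjective, sumSqLagrangian, Finset.sum_congr rfl fun k _ => complete_square k,
    Finset.sum_add_distrib, add_right_comm]

variable [Field K] [LinearOrder K] [IsStrictOrderedRing K]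

theorem sumSqLagrangian_le_sumSqObjective (g : κ → X → K) (h : X → K) (μ : κ → K) (x : X) :
    sumSqLagrangian g h μ x ≤ sumSqObjective g h x := by
  rw [sumSqObjective_eq_lagrangian_add_sum_residual_sq g h μ]
  exact le_add_of_nonneg_right (Finset.sum_nonneg fun k _ => sq_nonneg _)

theorem sumSqObjective_sub_le_of_lagrangian_le {g : κ → X → K} {h : X → K} {μ : κ → K} {x y : X}
    (hyx : sumSqLagrangian g h μ y ≤ sumSqLagrangian g h μ x) :
    sumSqObjective g h y - sumSqObjective g h x ≤ ∑ k, (μ k / 2 - g k y) ^ 2 :=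
  calc sumSqObjective g h y - sumSqObjective g h x
      ≤ sumSqObjective g h y - sumSqLagrangian g h μ y :=
        sub_le_sub_left (hyx.trans (sumSqLagrangian_le_sumSqObjective g h μ x)) _
    _ = ∑ k, (μ k / 2 - g k y) ^ 2 := by
        rw [sumSqObjective_eq_lagrangian_add_sum_residual_sq g h μ y, add_sub_cancel_left]

end SumSq

section UserAssociation

variable {M E K : Type*} [Fintype M]

/-- The load `∑ i, a i j * x i j` that the association `x` puts on server `j` when device `i`
contributes `a i j`. -/
def serverLoad [NonUnitalNonAssocSemiring K] (a : M → E → K) (j : E) (x : M → E → K) : K :=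
  ∑ i, a i j * x i j

variable [Fintype E]

theorem sum_mul_serverLoad [NonUnitalSemiring K] (μ : E → K) (a x : M → E → K) :
    ∑ j, μ j * serverLoad a j x = ∑ i, ∑ j, μ j * a i j * x i j := by
  simp only [serverLoad, Finset.mul_sum, mul_assoc]
  exact Finset.sum_comm

theorem sumSqLagrangian_serverLoad [Field K] (p q c : M → E → K) (μ ν : E → K) (x : M → E → K) :
    sumSqLagrangian (Sum.elim (serverLoad p) (serverLoad q)) (fun x => ∑ i, ∑ j, c i j * x i j)
        (Sum.elim μ ν) x
      = ∑ i, ∑ j, (μ j * p i j + ν j * q i j + c i j) * x i j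
        - (∑ j, (μ j / 2) ^ 2 + ∑ j, (ν j / 2) ^ 2) := by
  simp only [sumSqLagrangian, Fintype.sum_sum_type, Sum.elim_inl, Sum.elim_inr,
    Finset.sum_sub_distrib, sum_mul_serverLoad, add_mul, Finset.sum_add_distrib]
  ring

theorem stmt_10_general [Field K] [LinearOrder K] [IsStrictOrderedRing K]
    (p q c : M → E → K) (μ ν : E → K) {S : Set (M → E → K)} {xhat : M → E → K}
    (hmin : IsMinOn (fun x => ∑ i, ∑ j, (μ j * p i j + ν j * q i j + c i j) * x i j) S xhat)
    {x : M → E → K} (hx : x ∈ S) :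
    (∑ j, (∑ i, p i j * xhat i j) ^ 2 + ∑ j, (∑ i, q i j * xhat i j) ^ 2
        + ∑ i, ∑ j, c i j * xhat i j)
      - (∑ j, (∑ i, p i j * x i j) ^ 2 + ∑ j, (∑ i, q i j * x i j) ^ 2
        + ∑ i, ∑ j, c i j * x i j)
    ≤ ∑ j, ((μ j / 2 - ∑ i, p i j * xhat i j) ^ 2
        + (ν j / 2 - ∑ i, q i j * xhat i j) ^ 2) := by
  have lagrangian_le :
      sumSqLagrangian (Sum.elim (serverLoad p) (serverLoad q))
          (fun x => ∑ i, ∑ j, c i j * x i j) (Sum.elim μ ν) xhat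
        ≤ sumSqLagrangian (Sum.elim (serverLoad p) (serverLoad q))
          (fun x => ∑ i, ∑ j, c i j * x i j) (Sum.elim μ ν) x := by
    rw [sumSqLagrangian_serverLoad, sumSqLagrangian_serverLoad]
    exact sub_le_sub_right (isMinOn_iff.mp hmin x hx) _
  simpa only [sumSqObjective, serverLoad, Fintype.sum_sum_type, Sum.elim_inl, Sum.elim_inr,
    ← Finset.sum_add_distrib] using sumSqObjective_sub_le_of_lagrangian_le lagrangian_le

end UserAssociation

/-- Weak duality / bounded optimality gap (the paper's Theorem 1): if `x̂` is
feasible and minimizes `∑ w i j · x i j` over feasible `x` (where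
`w i j = μ j p i j + ν j q i j + c i j`, with `p, q, μ, ν` nonnegative), then
for every feasible `x`, the gap `F(x̂) − F(x)` is bounded by
`∑_j (Δ₁ j² + Δ₂ j²)`, where `Δ₁ j = μ j/2 − ∑_i p i j x̂ i j` and
`Δ₂ j = ν j/2 − ∑_i q i j x̂ i j`. -/
theorem stmt_10 (m n : ℕ) (hm : 0 < m) (hn : 0 < n)
    (p q c : Fin m → Fin n → ℝ)
    (hp : ∀ i j, 0 ≤ p i j) (hq : ∀ i j, 0 ≤ q i j)
    (μ ν : Fin n → ℝ) (hμ : ∀ j, 0 ≤ μ j) (hν : ∀ j, 0 ≤ ν j)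
    (xhat : Fin m → Fin n → ℝ)
    (hxhat01 : ∀ i j, xhat i j = 0 ∨ xhat i j = 1)
    (hxhatrow : ∀ i, ∑ j, xhat i j ≤ 1)
    (hmin : ∀ x : Fin m → Fin n → ℝ,
      (∀ i j, x i j = 0 ∨ x i j = 1) → (∀ i, ∑ j, x i j ≤ 1) →
      ∑ i, ∑ j, (μ j * p i j + ν j * q i j + c i j) * xhat i j
        ≤ ∑ i, ∑ j, (μ j * p i j + ν j * q i j + c i j) * x i j) :
    ∀ x : Fin m → Fin n → ℝ,
      (∀ i j, x i j = 0 ∨ x i j = 1) → (∀ i, ∑ j, x i j ≤ 1) →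
      (∑ j, (∑ i, p i j * xhat i j) ^ 2 + ∑ j, (∑ i, q i j * xhat i j) ^ 2
          + ∑ i, ∑ j, c i j * xhat i j)
        - (∑ j, (∑ i, p i j * x i j) ^ 2 + ∑ j, (∑ i, q i j * x i j) ^ 2
          + ∑ i, ∑ j, c i j * x i j)
      ≤ ∑ j, ((μ j / 2 - ∑ i, p i j * xhat i j) ^ 2
          + (ν j / 2 - ∑ i, q i j * xhat i j) ^ 2) :=
  fun _ hx hxrow => stmt_10_general p q c μ ν
    (S := {x | (∀ i j, x i j = 0 ∨ x i j = 1) ∧ ∀ i, ∑ j, x i j ≤ 1})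
    (fun y hy => hmin y hy.1 hy.2) ⟨hx, hxrow⟩
end
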